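/- Let μ : [0,∞) → [0,∞) be nonincreasing with sup_{t>0} (1/log(1+t))∫₀^t μ(s) ds < ∞, and define the bounded sequence ξ = (ξ_N)_{N≥1} by ξ_N = (1/log(1+e^N))∫₀^{e^N} μ(s) ds. Then sup{ 𝕃(ξ) : 𝕃 a Banach limit on ℓ∞ } = limsup_{t → ∞} (1/log(1+t))∫₀^t μ(s) ds. -/

import Mathlib

open Filter MeasureTheory

/-- The shift operator on sequences: `(T x)_k = x_{k+1}`. -/
def shiftSeq (x : ℕ → ℝ) : ℕ → ℝ := fun k => x (k + 1)

/-- A sequence is bounded (belongs to ℓ∞). -/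
def BddSeq (x : ℕ → ℝ) : Prop := ∃ C : ℝ, ∀ k, |x k| ≤ C

open Topology

lemma bl_exists_tendsto (N : ℕ → ℕ) (x : ℕ → ℝ) (hx : BddSeq x) :
    ∃ l : ℝ, Tendsto (fun j : ℕ => (∑ k ∈ Finset.range (j+1), x (N j + k)) / ((j:ℝ)+1))
      (hyperfilter ℕ : Filter ℕ) (𝓝 l) := by
  obtain ⟨C, hC⟩ := hx
  have hmem : ∀ j : ℕ, (∑ k ∈ Finset.range (j+1), x (N j + k)) / ((j:ℝ)+1) ∈ Set.Icc (-C) C := by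
    intro j
    have hj : (0:ℝ) < (j:ℝ) + 1 := by positivity
    rw [Set.mem_Icc, ← abs_le, abs_div, abs_of_pos hj, div_le_iff₀ hj]
    calc |∑ k ∈ Finset.range (j+1), x (N j + k)| ≤ ∑ k ∈ Finset.range (j+1), |x (N j + k)| :=
          Finset.abs_sum_le_sum_abs _ _
      _ ≤ ∑ k ∈ Finset.range (j+1), C := Finset.sum_le_sum fun k _ => hC _
      _ = C * ((j:ℝ)+1) := by simp; ring
  obtain ⟨l, -, hl⟩ := (isCompact_Icc (a := -C) (b := C)).ultrafilter_le_nhds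
    ((hyperfilter ℕ).map (fun j : ℕ => (∑ k ∈ Finset.range (j+1), x (N j + k)) / ((j:ℝ)+1)))
    (by
      rw [le_principal_iff]
      exact Filter.mem_map.2 (Filter.univ_mem' hmem))
  exact ⟨l, hl⟩

def bddSub : Submodule ℝ (ℕ → ℝ) where
  carrier := {x | BddSeq x}
  zero_mem' := ⟨0, by simp⟩
  add_mem' := by
    rintro x y ⟨C, hC⟩ ⟨D, hD⟩
    exact ⟨C + D, fun k => (abs_add_le _ _).trans (add_le_add (hC k) (hD k))⟩
  smul_mem' := by
    rintro c x ⟨C, hC⟩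
    refine ⟨|c| * C, fun k => ?_⟩
    simp only [Pi.smul_apply, smul_eq_mul, abs_mul]
    exact mul_le_mul_of_nonneg_left (hC k) (abs_nonneg c)

lemma bl_exists_functional (N : ℕ → ℕ) :
    ∃ L : (ℕ → ℝ) →ₗ[ℝ] ℝ, ∀ x, BddSeq x →
      Tendsto (fun j : ℕ => (∑ k ∈ Finset.range (j+1), x (N j + k)) / ((j:ℝ)+1))
      (hyperfilter ℕ : Filter ℕ) (𝓝 (L x)) := by
  choose l hl using bl_exists_tendsto N
  let f : bddSub →ₗ[ℝ] ℝ :=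
    { toFun := fun x => l x.1 x.2
      map_add' := by
        intro x y
        refine tendsto_nhds_unique (hl _ (x+y).2) ?_
        refine ((hl x.1 x.2).add (hl y.1 y.2)).congr fun j => ?_
        simp [Finset.sum_add_distrib, add_div]
      map_smul' := by
        intro c x
        refine tendsto_nhds_unique (hl _ (c • x).2) ?_
        refine ((hl x.1 x.2).const_mul c).congr fun j => ?_
        simp [← Finset.mul_sum, mul_div_assoc] }
  obtain ⟨g, hg⟩ := LinearMap.exists_extend f
  refine ⟨g, fun x hx => ?_⟩
  have : g x = l x hx := by
    have := LinearMap.congr_fun hg ⟨x, hx⟩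
    exact this
  rw [this]
  exact hl x hx

lemma bl_exists_banach (N : ℕ → ℕ) :
    ∃ L : (ℕ → ℝ) →ₗ[ℝ] ℝ, (∀ x : ℕ → ℝ, BddSeq x → (∀ k, 0 ≤ x k) → 0 ≤ L x) ∧
        L (fun _ => 1) = 1 ∧
        (∀ x : ℕ → ℝ, BddSeq x → L (shiftSeq x) = L x) ∧
        (∀ x a, BddSeq x → (∀ j : ℕ, ∀ k ≤ j, a - 1 / ((j:ℝ)+1) ≤ x (N j + k)) → a ≤ L x) := by
  obtain ⟨L, hL⟩ := bl_exists_functional N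
  have hle : (hyperfilter ℕ : Filter ℕ) ≤ atTop := Nat.hyperfilter_le_atTop
  have hz : Tendsto (fun j : ℕ => 1 / ((j:ℝ)+1)) (hyperfilter ℕ : Filter ℕ) (𝓝 0) :=
    tendsto_one_div_add_atTop_nhds_zero_nat.mono_left hle
  refine ⟨L, ?_, ?_, ?_, ?_⟩
  · intro x hx h0
    exact ge_of_tendsto' (hL x hx) fun j =>
      div_nonneg (Finset.sum_nonneg fun k _ => h0 _) (by positivity)
  · refine tendsto_nhds_unique (hL _ ⟨1, by simp⟩) ?_
    refine tendsto_const_nhds.congr fun j => ?_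
    have hj : (j:ℝ) + 1 ≠ 0 := by positivity
    simp [hj]
  · rintro x ⟨C, hC⟩
    have hs : BddSeq (shiftSeq x) := ⟨C, fun k => hC _⟩
    have h1 := (hL _ hs).sub (hL x ⟨C, hC⟩)
    have h2 : Tendsto (fun j : ℕ => 2 * C * (1 / ((j:ℝ)+1))) (hyperfilter ℕ : Filter ℕ) (𝓝 0) := by
      simpa using hz.const_mul (2 * C)
    have h3 := tendsto_nhds_unique h1 (squeeze_zero_norm (fun j => ?_) h2)
    · linarith
    · have hj : (0:ℝ) < (j:ℝ) + 1 := by positivity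
      rw [← sub_div, ← Finset.sum_sub_distrib]
      have : ∑ k ∈ Finset.range (j+1), (shiftSeq x (N j + k) - x (N j + k))
          = x (N j + (j+1)) - x (N j) :=
        Finset.sum_range_sub (fun k => x (N j + k)) (j+1)
      rw [this, Real.norm_eq_abs, abs_div, abs_of_pos hj, mul_one_div]
      gcongr
      have := abs_sub (x (N j + (j+1))) (x (N j))
      linarith [hC (N j + (j+1)), hC (N j)]
  · intro x a hx h
    have h1 : Tendsto (fun j : ℕ => a - 1 / ((j:ℝ)+1)) (hyperfilter ℕ : Filter ℕ) (𝓝 a) := by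
      simpa using tendsto_const_nhds.sub hz
    refine le_of_tendsto_of_tendsto' h1 (hL x hx) fun j => ?_
    have hj : (0:ℝ) < (j:ℝ) + 1 := by positivity
    rw [le_div_iff₀ hj]
    calc (a - 1 / ((j:ℝ)+1)) * ((j:ℝ)+1)
        = ∑ k ∈ Finset.range (j+1), (a - 1 / ((j:ℝ)+1)) := by
          rw [Finset.sum_const, Finset.card_range, nsmul_eq_mul]; push_cast; ring
      _ ≤ _ := Finset.sum_le_sum fun k hk => h j k (by simp at hk; omega)

lemma bl_upper (L : (ℕ → ℝ) →ₗ[ℝ] ℝ)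
    (hpos : ∀ x : ℕ → ℝ, BddSeq x → (∀ k, 0 ≤ x k) → 0 ≤ L x)
    (h1 : L (fun _ => 1) = 1)
    (hs : ∀ x : ℕ → ℝ, BddSeq x → L (shiftSeq x) = L x) (b : ℝ) (m : ℕ) :
    ∀ (x : ℕ → ℝ) (_ : BddSeq x) (_ : ∀ k, m ≤ k → x k ≤ b), L x ≤ b := by
  induction m with
  | zero =>
    intro x hx hb
    have h := hpos (b • (fun _ => (1:ℝ)) - x)
      (bddSub.sub_mem (bddSub.smul_mem b ⟨1, by simp⟩) hx) (fun k => by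
        have := hb k (Nat.zero_le _)
        simpa using this)
    rw [map_sub, map_smul, h1] at h
    simp at h
    exact h
  | succ m ih =>
    intro x hx hb
    rw [← hs x hx]
    obtain ⟨C, hC⟩ := hx
    exact ih _ ⟨C, fun k => hC _⟩ fun k hk => hb _ (by omega)

lemma bl_window (F : ℝ → ℝ) (hF0 : ∀ t, 0 ≤ t → 0 ≤ F t)
    (hFm : ∀ s t, 0 ≤ s → s ≤ t → F s ≤ F t) (K : ℝ)
    (hK : ∀ t : ℝ, 0 < t → F t / Real.log (1 + t) ≤ K) (a ε : ℝ) (hε : 0 < ε)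
    (hfr : ∃ᶠ t : ℝ in atTop, a - ε / 2 < if 0 < t then F t / Real.log (1 + t) else 0) (j : ℕ) :
    ∃ N : ℕ, ∀ k ≤ j, a - ε ≤ F (Real.exp ((N + k : ℕ) : ℝ)) /
      Real.log (1 + Real.exp ((N + k : ℕ) : ℝ)) := by
  have hlog : Tendsto (fun t : ℝ => Real.log (1 + t)) atTop atTop :=
    Real.tendsto_log_atTop.comp (tendsto_atTop_add_const_left _ _ tendsto_id)
  obtain ⟨t, hft, ht1, hKt⟩ := (hfr.and_eventually ((eventually_ge_atTop 1).and
    (hlog.eventually_ge_atTop (K * (j+1) / (ε/2))))).exists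
  have ht : 0 < t := by linarith
  rw [if_pos ht] at hft
  refine ⟨⌈Real.log t⌉₊, fun k hk => ?_⟩
  set M : ℝ := ((⌈Real.log t⌉₊ + k : ℕ) : ℝ) with hM
  have hk' : (k:ℝ) ≤ j := by exact_mod_cast hk
  have hk0 : (0:ℝ) ≤ k := by positivity
  have hM1 : Real.log t ≤ M := by
    have := Nat.le_ceil (Real.log t)
    rw [hM]; push_cast; linarith
  have hM2 : M ≤ Real.log t + (j + 1) := by
    have := Nat.ceil_lt_add_one (Real.log_nonneg ht1)
    rw [hM]; push_cast; linarith
  have hE1 : t ≤ Real.exp M := by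
    rw [← Real.log_le_iff_le_exp ht]; exact hM1
  have hE2 : Real.exp M ≤ t * Real.exp (j+1) := by
    calc Real.exp M ≤ Real.exp (Real.log t + (j+1)) := Real.exp_le_exp.2 hM2
      _ = _ := by rw [Real.exp_add, Real.exp_log ht]
  set ℓ := Real.log (1 + t) with hℓ
  have hℓ0 : 0 < ℓ := Real.log_pos (by linarith)
  have hJ : (0:ℝ) < (j:ℝ) + 1 := by positivity
  have hl : Real.log (1 + Real.exp M) ≤ ℓ + (j + 1) := by
    have h1 : (1:ℝ) ≤ Real.exp ((j:ℝ)+1) := Real.one_le_exp hJ.le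
    calc Real.log (1 + Real.exp M) ≤ Real.log ((1 + t) * Real.exp (j+1)) :=
          Real.log_le_log (by positivity) (by nlinarith)
      _ = _ := by rw [Real.log_mul (by positivity) (by positivity), Real.log_exp]
  have hl0 : 0 < Real.log (1 + Real.exp M) := Real.log_pos (by linarith [Real.exp_pos M])
  have hFt := hF0 t ht.le
  calc a - ε ≤ F t / ℓ - ε / 2 := by linarith
    _ ≤ F t / (ℓ + (j+1)) := by
      have e : F t / (ℓ + (j+1)) = F t / ℓ - (F t / ℓ) * (j+1) / (ℓ + (j+1)) := by
        field_simp; ring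
      rw [e]
      have : (F t / ℓ) * (j+1) / (ℓ + (j+1)) ≤ ε / 2 := by
        rw [div_le_iff₀ (by positivity)]
        rw [div_le_iff₀ (by positivity)] at hKt
        have := mul_le_mul_of_nonneg_right (hK t ht) hJ.le
        nlinarith
      linarith
    _ ≤ F t / Real.log (1 + Real.exp M) := by gcongr
    _ ≤ _ := by gcongr; exact hFm t _ ht.le hE1

/-- **Norming property of Banach limits (Sucheston-type result).**
For a nonincreasing `μ : [0,∞) → [0,∞)` with `sup_{t>0} (1/log(1+t))∫₀^t μ < ∞` and the
bounded sequence `ξ_N = (1/log(1+e^N))∫₀^{e^N} μ(s) ds`, the supremum of `𝕃(ξ)` over all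
Banach limits `𝕃` equals `limsup_{t→∞} (1/log(1+t))∫₀^t μ(s) ds`. -/
theorem sup_banach_limits_eq_limsup (μ : ℝ → ℝ)
    (hμ0 : ∀ s : ℝ, 0 ≤ s → 0 ≤ μ s) (hmono : AntitoneOn μ (Set.Ici 0))
    (K : ℝ)
    (hK : ∀ t : ℝ, 0 < t → (∫ s in (0:ℝ)..t, μ s) / Real.log (1 + t) ≤ K) :
    sSup {r : ℝ | ∃ L : (ℕ → ℝ) →ₗ[ℝ] ℝ,
        -- L is positive
        (∀ x : ℕ → ℝ, BddSeq x → (∀ k, 0 ≤ x k) → 0 ≤ L x) ∧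
        -- L(𝟏) = 1
        L (fun _ => 1) = 1 ∧
        -- L is translation (shift) invariant
        (∀ x : ℕ → ℝ, BddSeq x → L (shiftSeq x) = L x) ∧
        -- r is the value of L on the sequence ξ
        L (fun N : ℕ => (∫ s in (0:ℝ)..(Real.exp N), μ s) /
            Real.log (1 + Real.exp N)) = r}
      = limsup (fun t : ℝ =>
          if 0 < t then (∫ s in (0:ℝ)..t, μ s) / Real.log (1 + t) else 0) atTop := by
  have hint : ∀ s t : ℝ, 0 ≤ s → 0 ≤ t → IntervalIntegrable μ volume s t := by
    intro s t hs ht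
    refine (hmono.mono ?_).intervalIntegrable
    intro u hu
    exact (le_min hs ht).trans hu.1
  set F : ℝ → ℝ := fun t => ∫ s in (0:ℝ)..t, μ s with hFdef
  have hF0 : ∀ t, 0 ≤ t → 0 ≤ F t := fun t ht =>
    intervalIntegral.integral_nonneg ht fun u hu => hμ0 u hu.1
  have hFm : ∀ s t, 0 ≤ s → s ≤ t → F s ≤ F t := by
    intro s t hs hst
    have h1 := intervalIntegral.integral_add_adjacent_intervals (hint 0 s le_rfl hs)
      (hint s t hs (hs.trans hst))
    have h2 : 0 ≤ ∫ u in s..t, μ u :=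
      intervalIntegral.integral_nonneg hst fun u hu => hμ0 u (hs.trans hu.1)
    simp only [hFdef]
    linarith
  have hf0 : ∀ t, 0 < t → 0 ≤ F t / Real.log (1 + t) := fun t ht =>
    div_nonneg (hF0 t ht.le) (Real.log_nonneg (by linarith))
  set f : ℝ → ℝ := fun t => if 0 < t then F t / Real.log (1 + t) else 0 with hf
  have hbl : ∀ t, 0 ≤ f t := by
    intro t
    simp only [hf]
    split_ifs with h
    · exact hf0 t h
    · exact le_rfl
  have hK0 : 0 ≤ K := (hf0 1 one_pos).trans (hK 1 one_pos)
  have hbu : ∀ t, f t ≤ K := by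
    intro t
    simp only [hf]
    split_ifs with h
    · exact hK t h
    · exact hK0
  have hbdd : IsBoundedUnder (· ≤ ·) atTop f := isBoundedUnder_of ⟨K, hbu⟩
  have hbdd' : IsBoundedUnder (· ≥ ·) atTop f := isBoundedUnder_of ⟨0, hbl⟩
  set a := limsup f atTop with ha
  have hξ : BddSeq (fun N : ℕ => F (Real.exp N) / Real.log (1 + Real.exp N)) :=
    ⟨K, fun N => by
      rw [abs_of_nonneg (hf0 _ (Real.exp_pos _))]
      exact hK _ (Real.exp_pos _)⟩
  have hup : ∀ L : (ℕ → ℝ) →ₗ[ℝ] ℝ,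
      (∀ x : ℕ → ℝ, BddSeq x → (∀ k, 0 ≤ x k) → 0 ≤ L x) →
      L (fun _ => 1) = 1 → (∀ x : ℕ → ℝ, BddSeq x → L (shiftSeq x) = L x) →
      L (fun N : ℕ => F (Real.exp N) / Real.log (1 + Real.exp N)) ≤ a := by
    intro L h1 h2 h3
    refine le_of_forall_gt_imp_ge_of_dense fun b hb => ?_
    have hev : ∀ᶠ t in atTop, f t < b := eventually_lt_of_limsup_lt hb hbdd
    have hev' := (Real.tendsto_exp_atTop.comp tendsto_natCast_atTop_atTop).eventually hev
    obtain ⟨m, hm⟩ := eventually_atTop.1 hev'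
    refine bl_upper L h1 h2 h3 b m _ hξ fun k hk => ?_
    have := hm k hk
    simp only [hf, Function.comp, if_pos (Real.exp_pos _)] at this
    exact this.le
  have hwin : ∀ j : ℕ, ∃ N : ℕ, ∀ k ≤ j, a - 1 / ((j:ℝ)+1) ≤
      F (Real.exp ((N + k : ℕ) : ℝ)) / Real.log (1 + Real.exp ((N + k : ℕ) : ℝ)) := by
    intro j
    have hε : (0:ℝ) < 1 / ((j:ℝ)+1) := by positivity
    exact bl_window F hF0 hFm K hK a _ hε
      (frequently_lt_of_lt_limsup hbdd'.isCoboundedUnder_le (by linarith)) j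
  choose N hN using hwin
  obtain ⟨L, h1, h2, h3, h4⟩ := bl_exists_banach N
  refine IsGreatest.csSup_eq ⟨⟨L, h1, h2, h3, ?_⟩, ?_⟩
  · exact le_antisymm (hup L h1 h2 h3) (h4 _ a hξ hN)
  · rintro r ⟨L', h1', h2', h3', rfl⟩
    exact hup L' h1' h2' h3'
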